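/- Every AFRA possesses at least one preferred extension. -/

import Mathlib

/-!
The union of a chain of admissible sets is admissible: a conflict in the union involves only two
elements, hence already occurs in a single member of the chain, and acceptability is monotone in the
defending set. Zorn's lemma then produces a maximal admissible set. (The empty chain is covered too,
as its union, the empty set, is vacuously admissible.)
-/

/-- An Argumentation Framework with Recursive Attacks: a set (type) of
arguments, a set (type) of attacks, each attack having a source argument
and a target which is either an argument or an attack. -/
structure AFRA where
  Arg : Type
  Att : Type
  src : Att → Arg
  trg : Att → Arg ⊕ Att

namespace AFRA

/-- The elements of an AFRA: arguments and attacks. -/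
abbrev El (Γ : AFRA) : Type := Γ.Arg ⊕ Γ.Att

variable (Γ : AFRA)

/-- An attack `α` defeats `V` iff `V = trg α` (direct defeat) or `V` is an
attack whose source is `trg α` (indirect defeat). -/
def Defeats (α : Γ.Att) (V : Γ.El) : Prop :=
  V = Γ.trg α ∨ ∃ β : Γ.Att, V = Sum.inr β ∧ Γ.trg α = Sum.inl (Γ.src β)

/-- `W` is acceptable w.r.t. `S` iff every attack defeating `W` is defeated by
some attack in `S`. -/
def Acceptable (S : Set Γ.El) (W : Γ.El) : Prop :=
  ∀ α : Γ.Att, Γ.Defeats α W → ∃ β : Γ.Att, Sum.inr β ∈ S ∧ Γ.Defeats β (Sum.inr α)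

/-- `S` is conflict-free iff no element of `S` defeats another element of `S`. -/
def ConflictFree (S : Set Γ.El) : Prop :=
  ¬ ∃ α : Γ.Att, Sum.inr α ∈ S ∧ ∃ W ∈ S, Γ.Defeats α W

/-- The characteristic function of an AFRA. -/
def charFun (S : Set Γ.El) : Set Γ.El := {V | Γ.Acceptable S V}

/-- `S` is admissible iff it is conflict-free and all its elements are
acceptable w.r.t. `S`. -/
def Admissible (S : Set Γ.El) : Prop :=
  Γ.ConflictFree S ∧ ∀ V ∈ S, Γ.Acceptable S V

/-- `S` is a complete extension iff it is admissible and contains every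
element acceptable w.r.t. it. -/
def Complete (S : Set Γ.El) : Prop :=
  Γ.Admissible S ∧ ∀ V : Γ.El, Γ.Acceptable S V → V ∈ S

/-- `S` is a preferred extension iff it is a maximal admissible set. -/
def Preferred (S : Set Γ.El) : Prop :=
  Γ.Admissible S ∧ ∀ T : Set Γ.El, Γ.Admissible T → S ⊆ T → S = T

/-- `S` is a stable extension iff it is conflict-free and defeats every
element outside of it. -/
def Stable (S : Set Γ.El) : Prop :=
  Γ.ConflictFree S ∧ ∀ V : Γ.El, V ∉ S → ∃ α : Γ.Att, Sum.inr α ∈ S ∧ Γ.Defeats α V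

/-- The range of `S`: `S` together with everything defeated by `S`. -/
def range (S : Set Γ.El) : Set Γ.El :=
  S ∪ {V : Γ.El | ∃ α : Γ.Att, Sum.inr α ∈ S ∧ Γ.Defeats α V}

/-- `S` is a semi-stable extension iff it is a complete extension with
maximal range among complete extensions. -/
def SemiStable (S : Set Γ.El) : Prop :=
  Γ.Complete S ∧ ∀ T : Set Γ.El, Γ.Complete T → Γ.range S ⊆ Γ.range T → Γ.range T = Γ.range S

/-- `S` is ideal iff it is admissible and contained in every preferred
extension. -/
def Ideal (S : Set Γ.El) : Prop :=
  Γ.Admissible S ∧ ∀ P : Set Γ.El, Γ.Preferred P → S ⊆ P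

/-- An AFRA is an AF when every attack targets an argument. -/
def IsAF : Prop := ∀ α : Γ.Att, ∃ a : Γ.Arg, Γ.trg α = Sum.inl a

/-- The Dung attack relation between arguments. -/
def AttacksAF (a b : Γ.Arg) : Prop :=
  ∃ α : Γ.Att, Γ.src α = a ∧ Γ.trg α = Sum.inl b

/-- D-conflict-freeness of a set of arguments. -/
def DConflictFree (U : Set Γ.Arg) : Prop :=
  ¬ ∃ a ∈ U, ∃ b ∈ U, Γ.AttacksAF a b

/-- D-acceptability of an argument w.r.t. a set of arguments. -/
def DAcceptable (U : Set Γ.Arg) (a : Γ.Arg) : Prop :=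
  ∀ b : Γ.Arg, Γ.AttacksAF b a → ∃ c ∈ U, Γ.AttacksAF c b

/-- The D-characteristic function on sets of arguments. -/
def dCharFun (U : Set Γ.Arg) : Set Γ.Arg := {a | Γ.DAcceptable U a}

/-- D-admissibility of a set of arguments. -/
def DAdmissible (U : Set Γ.Arg) : Prop :=
  Γ.DConflictFree U ∧ ∀ a ∈ U, Γ.DAcceptable U a

/-- D-complete extensions. -/
def DComplete (U : Set Γ.Arg) : Prop :=
  Γ.DAdmissible U ∧ ∀ a : Γ.Arg, Γ.DAcceptable U a → a ∈ U

/-- D-preferred extensions: maximal D-admissible sets. -/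
def DPreferred (U : Set Γ.Arg) : Prop :=
  Γ.DAdmissible U ∧ ∀ W : Set Γ.Arg, Γ.DAdmissible W → U ⊆ W → U = W

/-- The operator completing a set of arguments with all attacks arising
from it. -/
def Ext (U : Set Γ.Arg) : Set Γ.El :=
  (Sum.inl '' U) ∪ (Sum.inr '' {α : Γ.Att | Γ.src α ∈ U})

end AFRA

theorem AFRA.Acceptable.mono {Γ : AFRA} {S T : Set Γ.El} {W : Γ.El} (hST : S ⊆ T)
    (h : Γ.Acceptable S W) : Γ.Acceptable T W := fun α hα =>
  let ⟨β, hβ, hd⟩ := h α hα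
  ⟨β, hST hβ, hd⟩

theorem AFRA.Admissible.sUnion {Γ : AFRA} {c : Set (Set Γ.El)}
    (hc : ∀ S ∈ c, Γ.Admissible S) (hchain : IsChain (· ⊆ ·) c) : Γ.Admissible (⋃₀ c) := by
  refine ⟨?_, ?_⟩
  · rintro ⟨α, ⟨S, hS, hα⟩, W, ⟨T, hT, hW⟩, hd⟩
    rcases hchain.total hS hT with h | h
    · exact (hc T hT).1 ⟨α, h hα, W, hW, hd⟩
    · exact (hc S hS).1 ⟨α, hα, W, h hW, hd⟩
  · rintro V ⟨S, hS, hV⟩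
    exact ((hc S hS).2 V hV).mono (Set.subset_sUnion_of_mem hS)

/-- Every AFRA possesses at least one preferred extension. -/
theorem stmt_8 (Γ : AFRA) : ∃ S : Set Γ.El, Γ.Preferred S := by
  obtain ⟨M, hM⟩ := zorn_subset {S | Γ.Admissible S} fun c hc hchain =>
    ⟨⋃₀ c, AFRA.Admissible.sUnion (fun _ hS => hc hS) hchain,
      fun _ hS => Set.subset_sUnion_of_mem hS⟩
  exact ⟨M, hM.prop, fun T hT hMT => hM.eq_of_subset hT hMT⟩
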